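/- Let s ≥ 2 be an integer, let K > 0, and let B be a set of positive integers. For an integer N ≥ 3 with B(N) ≤ K·log N, call an integer n good for N if N/2 ≤ n ≤ N and |n − b| > (log N)^{4s} for every b ∈ B. For a positive integer n, let Ω_n be the collection of s-element sets ω of positive integers such that n − σ(ω) ∈ B, where σ(ω) is the sum of the elements of ω. Then there is a constant C depending only on s and K such that for all N ≥ 3 and all integers n, m that are good for N, Σ s^{-|ω∪ω'|} · ∏_{x∈ω∪ω'} x^{-1+1/s} ≤ C/log N, where the sum runs over all pairs (ω, ω') with ω ∈ Ω_n, ω' ∈ Ω_m, ω ≠ ω' and ω ∩ ω' ≠ ∅. -/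

import Mathlib

open Finset Filter

open scoped Classical

/-- The counting function `B(n) = |B ∩ [1, n]|` of a set of positive integers. -/
noncomputable def countB (B : Set ℕ) (n : ℕ) : ℕ := (B ∩ Set.Icc 1 n).ncard

theorem aux_sum_rpow (p : ℝ) (hp : 0 < p) (hp1 : p ≤ 1) (u : ℕ) :
    ∑ t ∈ Finset.Ico 1 u, (t : ℝ) ^ (p - 1) ≤ (u : ℝ) ^ p / p := by
  have key : ∀ v : ℕ, ∑ t ∈ Finset.Ico 1 (v + 1), (t : ℝ) ^ (p - 1) ≤ (v : ℝ) ^ p / p := by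
    intro v
    induction v with
    | zero => simp [Real.zero_rpow hp.ne']
    | succ v ih =>
      rw [Finset.sum_Ico_succ_top (by omega)]
      refine le_trans (add_le_add_left ih _) ?_
      have ht : (0 : ℝ) < ((v + 1 : ℕ) : ℝ) := by positivity
      set T : ℝ := ((v + 1 : ℕ) : ℝ) with hT
      have hv : (v : ℝ) = T * (1 + (-(1 / T))) := by
        field_simp
        rw [hT]; push_cast; ring
      have hT1 : (1 : ℝ) ≤ T := by rw [hT]; push_cast; linarith [Nat.cast_nonneg (α := ℝ) v]
      have h1T : 1 / T ≤ 1 := by rw [div_le_one ht]; exact hT1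
      have hb := rpow_one_add_le_one_add_mul_self (s := -(1 / T)) (by linarith) hp.le hp1
      have h2 : (v : ℝ) ^ p ≤ T ^ p * (1 + p * (-(1 / T))) := by
        rw [hv, Real.mul_rpow ht.le (by linarith)]
        exact mul_le_mul_of_nonneg_left hb (Real.rpow_nonneg ht.le _)
      have h3 : T ^ (p - 1) = T ^ p / T := by rw [Real.rpow_sub ht, Real.rpow_one]
      rw [h3, div_add' _ _ _ hp.ne']
      apply div_le_div_of_nonneg_right _ hp.le
      calc _ ≤ T ^ p * (1 + p * (-(1 / T))) + T ^ p / T * p := by linarith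
        _ = T ^ p := by field_simp; ring
  rcases u with _ | v
  · simp [Real.zero_rpow hp.ne']
  · refine (key v).trans ?_
    apply div_le_div_of_nonneg_right _ hp.le
    apply Real.rpow_le_rpow (by positivity) _ hp.le
    push_cast; linarith

theorem aux_half (q : ℝ) (hq : 0 < q) (hq1 : q ≤ 1) (u x : ℝ) (hu : 0 < u) (hx : u / 2 ≤ x) :
    x ^ (q - 1) ≤ 2 * u ^ (q - 1) := by
  have h1 : x ^ (q - 1) ≤ (u / 2) ^ (q - 1) :=
    Real.rpow_le_rpow_of_nonpos (by positivity) hx (by linarith)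
  refine h1.trans ?_
  rw [Real.div_rpow hu.le (by norm_num), div_eq_mul_inv, mul_comm,
    ← Real.rpow_neg (by norm_num)]
  apply mul_le_mul_of_nonneg_right _ (Real.rpow_nonneg hu.le _)
  calc (2 : ℝ) ^ (-(q - 1)) ≤ 2 ^ (1 : ℝ) :=
        Real.rpow_le_rpow_of_exponent_le (by norm_num) (by linarith)
    _ = 2 := Real.rpow_one _

theorem aux_conv (p q : ℝ) (hp : 0 < p) (hp1 : p ≤ 1) (hq : 0 < q) (hq1 : q ≤ 1) (u : ℕ) :
    ∑ t ∈ Finset.Ico 1 u, (t : ℝ) ^ (p - 1) * ((u - t : ℕ) : ℝ) ^ (q - 1) ≤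
      (2 / p + 2 / q) * (u : ℝ) ^ (p + q - 1) := by
  rcases Nat.eq_zero_or_pos u with h0 | hu0
  · subst h0; simp; positivity
  have hu : (0 : ℝ) < u := by exact_mod_cast hu0
  have step : ∀ t ∈ Finset.Ico 1 u, (t : ℝ) ^ (p - 1) * ((u - t : ℕ) : ℝ) ^ (q - 1) ≤
      2 * (u : ℝ) ^ (q - 1) * (t : ℝ) ^ (p - 1) +
      2 * (u : ℝ) ^ (p - 1) * ((u - t : ℕ) : ℝ) ^ (q - 1) := by
    intro t ht
    rw [Finset.mem_Ico] at ht
    have hc : ((u - t : ℕ) : ℝ) = (u : ℝ) - t := by rw [Nat.cast_sub ht.2.le]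
    have n1 : (0 : ℝ) ≤ (t : ℝ) ^ (p - 1) := by positivity
    have n2 : (0 : ℝ) ≤ ((u - t : ℕ) : ℝ) ^ (q - 1) := by positivity
    have n3 : (0 : ℝ) ≤ (u : ℝ) ^ (p - 1) := by positivity
    have n4 : (0 : ℝ) ≤ (u : ℝ) ^ (q - 1) := by positivity
    rcases le_total (t : ℝ) (u / 2) with h | h
    · have := aux_half q hq hq1 u ((u - t : ℕ) : ℝ) hu (by rw [hc]; linarith)
      nlinarith [mul_le_mul_of_nonneg_left this n1, mul_nonneg n3 n2]
    · have := aux_half p hp hp1 u t hu h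
      nlinarith [mul_le_mul_of_nonneg_right this n2, mul_nonneg n4 n1]
  refine (Finset.sum_le_sum step).trans ?_
  rw [Finset.sum_add_distrib, ← Finset.mul_sum, ← Finset.mul_sum]
  have hr : ∑ t ∈ Finset.Ico 1 u, ((u - t : ℕ) : ℝ) ^ (q - 1) =
      ∑ t ∈ Finset.Ico 1 u, (t : ℝ) ^ (q - 1) := by
    apply Finset.sum_nbij' (fun t => u - t) (fun t => u - t)
    · intro t ht; rw [Finset.mem_Ico] at *; omega
    · intro t ht; rw [Finset.mem_Ico] at *; omega
    · intro t ht; rw [Finset.mem_Ico] at *; omega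
    · intro t ht; rw [Finset.mem_Ico] at *; omega
    · intro t ht; rfl
  rw [hr]
  have a1 := aux_sum_rpow p hp hp1 u
  have a2 := aux_sum_rpow q hq hq1 u
  have e1 : (u : ℝ) ^ (p + q - 1) = (u : ℝ) ^ (q - 1) * (u : ℝ) ^ p := by
    rw [← Real.rpow_add hu]; congr 1; ring
  have e2 : (u : ℝ) ^ (p + q - 1) = (u : ℝ) ^ (p - 1) * (u : ℝ) ^ q := by
    rw [← Real.rpow_add hu]; congr 1; ring
  calc _ ≤ 2 * (u : ℝ) ^ (q - 1) * ((u : ℝ) ^ p / p) + 2 * (u : ℝ) ^ (p - 1) * ((u : ℝ) ^ q / q) := by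
        gcongr
    _ = 2 / p * ((u : ℝ) ^ (q - 1) * (u : ℝ) ^ p) + 2 / q * ((u : ℝ) ^ (p - 1) * (u : ℝ) ^ q) := by
        ring
    _ = _ := by rw [← e1, ← e2]; ring

noncomputable def auxw (s x : ℕ) : ℝ := (x : ℝ) ^ (-1 + 1 / (s : ℝ))

theorem auxw_nonneg (s x : ℕ) : 0 ≤ auxw s x := by unfold auxw; positivity

theorem auxp_nonneg (s : ℕ) (ω : Finset ℕ) : 0 ≤ ∏ x ∈ ω, auxw s x :=
  Finset.prod_nonneg fun x _ => auxw_nonneg s x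

noncomputable def auxG (k t : ℕ) : Finset (Finset ℕ) :=
  (Finset.powersetCard k (Finset.Icc 1 t)).filter (fun ω => ω.sum id = t)

theorem mem_auxG (k t : ℕ) (ω : Finset ℕ) :
    ω ∈ auxG k t ↔ ω.card = k ∧ (∀ x ∈ ω, 1 ≤ x) ∧ ω.sum id = t := by
  unfold auxG
  rw [Finset.mem_filter, Finset.mem_powersetCard]
  constructor
  · rintro ⟨⟨h1, h2⟩, h3⟩
    exact ⟨h2, fun x hx => (Finset.mem_Icc.1 (h1 hx)).1, h3⟩
  · rintro ⟨h1, h2, h3⟩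
    refine ⟨⟨fun x hx => Finset.mem_Icc.2 ⟨h2 x hx, ?_⟩, h1⟩, h3⟩
    rw [← h3]
    exact Finset.single_le_sum (f := id) (fun i _ => Nat.zero_le _) hx

noncomputable def auxW (s k t : ℕ) : ℝ := ∑ ω ∈ auxG k t, ∏ x ∈ ω, auxw s x

theorem auxW_nonneg (s k t : ℕ) : 0 ≤ auxW s k t :=
  Finset.sum_nonneg fun ω _ => auxp_nonneg s ω

theorem aux_sum_pos {ω : Finset ℕ} (h : ∀ x ∈ ω, 1 ≤ x) (hne : ω.Nonempty) : 1 ≤ ω.sum id := by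
  obtain ⟨x, hx⟩ := hne
  exact (h x hx).trans (Finset.single_le_sum (f := id) (fun i _ => Nat.zero_le _) hx)

theorem auxW_succ (s k t : ℕ) (hk : 1 ≤ k) :
    auxW s (k + 1) t ≤ ∑ x ∈ Finset.Ico 1 t, auxw s x * auxW s k (t - x) := by
  have h1 : auxW s (k + 1) t ≤ ∑ ω ∈ auxG (k + 1) t, ∑ x ∈ Finset.Ico 1 t,
      if x ∈ ω then auxw s x * ∏ y ∈ ω.erase x, auxw s y else 0 := by
    apply Finset.sum_le_sum
    intro ω hω
    rw [mem_auxG] at hω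
    obtain ⟨hc, hpos, hsum⟩ := hω
    have hne : ω.Nonempty := by rw [← Finset.card_pos]; omega
    obtain ⟨x, hx⟩ := hne
    have hxt : x ∈ Finset.Ico 1 t := by
      rw [Finset.mem_Ico]
      refine ⟨hpos x hx, ?_⟩
      have := Finset.add_sum_erase ω id hx
      have h2 := aux_sum_pos (ω := ω.erase x) (fun y hy => hpos y (Finset.mem_of_mem_erase hy))
        (by rw [← Finset.card_pos, Finset.card_erase_of_mem hx]; omega)
      simp only [id] at this h2 hsum
      omega
    refine le_trans ?_ (Finset.single_le_sum (f := fun x => if x ∈ ω then auxw s x * ∏ y ∈ ω.erase x, auxw s y else 0) ?_ hxt)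
    · simp only [hx, if_true]
      rw [Finset.mul_prod_erase ω (auxw s) hx]
    · intro y _
      split_ifs
      · exact mul_nonneg (auxw_nonneg s y) (auxp_nonneg s _)
      · exact le_rfl
  refine h1.trans ?_
  rw [Finset.sum_comm]
  apply Finset.sum_le_sum
  intro x hx
  rw [Finset.mem_Ico] at hx
  rw [← Finset.sum_filter, ← Finset.mul_sum]
  apply mul_le_mul_of_nonneg_left _ (auxw_nonneg s x)
  unfold auxW
  have hinj : Set.InjOn (fun ω : Finset ℕ => ω.erase x)
      ((auxG (k + 1) t).filter (fun ω => x ∈ ω) : Finset (Finset ℕ)) := by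
    intro a ha b hb hab
    simp only [Finset.coe_filter, Set.mem_ofPred_eq] at ha hb
    dsimp only at hab
    rw [← Finset.insert_erase ha.2, hab, Finset.insert_erase hb.2]
  rw [← Finset.sum_image (f := fun ω => ∏ y ∈ ω, auxw s y) hinj]
  apply Finset.sum_le_sum_of_subset_of_nonneg
  · intro τ hτ
    rw [Finset.mem_image] at hτ
    obtain ⟨ω, hω, rfl⟩ := hτ
    rw [Finset.mem_filter, mem_auxG] at hω
    obtain ⟨⟨hc, hpos, hsum⟩, hxω⟩ := hω
    rw [mem_auxG]
    refine ⟨by rw [Finset.card_erase_of_mem hxω]; omega,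
      fun y hy => hpos y (Finset.mem_of_mem_erase hy), ?_⟩
    have := Finset.add_sum_erase ω id hxω
    simp only [id] at this hsum ⊢
    omega
  · intro τ _ _
    exact auxp_nonneg s τ

theorem auxW_bound (s : ℕ) (hs : 2 ≤ s) (k : ℕ) (hk : 1 ≤ k) : k ≤ s →
    ∃ C : ℝ, 0 < C ∧ ∀ t : ℕ, 1 ≤ t → auxW s k t ≤ C * (t : ℝ) ^ ((k : ℝ) / s - 1) := by
  have hs0 : (0 : ℝ) < s := by positivity
  induction k, hk using Nat.le_induction with
  | base =>
    intro _
    refine ⟨1, one_pos, fun t ht => ?_⟩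
    have : auxG 1 t ⊆ {{t}} := by
      intro ω hω
      rw [mem_auxG] at hω
      obtain ⟨hc, _, hsum⟩ := hω
      obtain ⟨a, rfl⟩ := Finset.card_eq_one.1 hc
      simp at hsum
      simp [hsum]
    refine (Finset.sum_le_sum_of_subset_of_nonneg this
      (fun ω _ _ => auxp_nonneg s ω)).trans ?_
    simp [auxw]
    apply le_of_eq
    congr 1; ring
  | succ k hk ih =>
    intro hks
    obtain ⟨C, hC, h⟩ := ih (by omega)
    have hk0 : (0 : ℝ) < k := by exact_mod_cast hk
    have hs1 : (1 : ℝ) / s ≤ 1 := by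
      rw [div_le_one hs0]; exact_mod_cast (by omega : 1 ≤ s)
    have hks1 : (k : ℝ) / s ≤ 1 := by
      rw [div_le_one hs0]; exact_mod_cast (by omega : k ≤ s)
    refine ⟨C * (2 / (1 / s) + 2 / (k / s)), by positivity, fun t ht => ?_⟩
    refine (auxW_succ s k t hk).trans ?_
    have hb : ∀ x ∈ Finset.Ico 1 t, auxw s x * auxW s k (t - x) ≤
        C * ((x : ℝ) ^ ((1 : ℝ) / s - 1) * ((t - x : ℕ) : ℝ) ^ ((k : ℝ) / s - 1)) := by
      intro x hx
      rw [Finset.mem_Ico] at hx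
      have h1 := mul_le_mul_of_nonneg_left (h (t - x) (by omega)) (auxw_nonneg s x)
      refine h1.trans (le_of_eq ?_)
      unfold auxw
      rw [show (-1 + 1 / (s : ℝ)) = (1 : ℝ) / s - 1 by ring]
      ring
    refine (Finset.sum_le_sum hb).trans ?_
    rw [← Finset.mul_sum, mul_assoc]
    apply mul_le_mul_of_nonneg_left _ hC.le
    have := aux_conv (1 / s) (k / s) (by positivity) hs1 (by positivity) hks1 t
    refine this.trans (le_of_eq ?_)
    congr 2
    push_cast
    ring

/-- conditions on a pair -/
def auxOK (s u v : ℕ) (p : Finset ℕ × Finset ℕ) : Prop :=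
  (∀ x ∈ p.1, 1 ≤ x) ∧ (∀ x ∈ p.2, 1 ≤ x) ∧ p.1.card = s ∧ p.2.card = s ∧
    p.1.sum id = u ∧ p.2.sum id = v

theorem aux_fiber (s u v k t : ℕ) (P : Finset (Finset ℕ × Finset ℕ))
    (hP : ∀ p ∈ P, auxOK s u v p ∧ (p.1 ∩ p.2).card = k ∧ (p.1 ∩ p.2).sum id = t) :
    ∑ p ∈ P, ∏ x ∈ p.1 ∪ p.2, auxw s x ≤
      auxW s k t * (auxW s (s - k) (u - t) * auxW s (s - k) (v - t)) := by
  unfold auxW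
  rw [Finset.sum_mul_sum, ← Finset.sum_product', Finset.sum_mul_sum, ← Finset.sum_product']
  have hinj : Set.InjOn (fun p : Finset ℕ × Finset ℕ => (p.1 ∩ p.2, (p.1 \ p.2, p.2 \ p.1)))
      (P : Set (Finset ℕ × Finset ℕ)) := by
    rintro ⟨a, a'⟩ _ ⟨b, b'⟩ _ hab
    simp only [Prod.mk.injEq] at hab
    obtain ⟨h1, h2, h3⟩ := hab
    rw [Prod.mk.injEq]
    constructor
    · rw [← Finset.sdiff_union_inter a a', h1, h2, Finset.sdiff_union_inter]
    · rw [← Finset.sdiff_union_inter a' a, Finset.inter_comm, h1, h3, Finset.inter_comm,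
        Finset.sdiff_union_inter]
  have heq : ∀ p ∈ P, ∏ x ∈ p.1 ∪ p.2, auxw s x =
      (∏ x ∈ p.1 ∩ p.2, auxw s x) * ((∏ x ∈ p.1 \ p.2, auxw s x) *
        ∏ x ∈ p.2 \ p.1, auxw s x) := by
    intro p _
    rw [← mul_assoc, Finset.prod_inter_mul_prod_sdiff, ← Finset.prod_union Finset.disjoint_sdiff,
      Finset.union_sdiff_self_eq_union]
  rw [Finset.sum_congr rfl heq]
  rw [← Finset.sum_image (f := fun c : Finset ℕ × Finset ℕ × Finset ℕ =>
    (∏ x ∈ c.1, auxw s x) * ((∏ x ∈ c.2.1, auxw s x) * ∏ x ∈ c.2.2, auxw s x)) hinj]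
  apply Finset.sum_le_sum_of_subset_of_nonneg
  · intro c hc
    rw [Finset.mem_image] at hc
    obtain ⟨p, hp, rfl⟩ := hc
    obtain ⟨⟨hp1, hp2, c1, c2, s1, s2⟩, hk, ht⟩ := hP p hp
    have e1 : (p.1 ∩ p.2).sum id + (p.1 \ p.2).sum id = p.1.sum id :=
      Finset.sum_inter_add_sum_sdiff p.1 p.2 id
    have e2 : (p.2 ∩ p.1).sum id + (p.2 \ p.1).sum id = p.2.sum id :=
      Finset.sum_inter_add_sum_sdiff p.2 p.1 id
    have d1 := Finset.card_inter_add_card_sdiff p.1 p.2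
    have d2 := Finset.card_inter_add_card_sdiff p.2 p.1
    rw [Finset.inter_comm p.2 p.1] at e2 d2
    rw [Finset.mem_product, Finset.mem_product, mem_auxG, mem_auxG, mem_auxG]
    dsimp only
    exact ⟨⟨hk, fun x hx => hp1 x (Finset.mem_inter.1 hx).1, ht⟩,
      ⟨by omega, fun x hx => hp1 x (Finset.mem_sdiff.1 hx).1, by omega⟩,
      ⟨by omega, fun x hx => hp2 x (Finset.mem_sdiff.1 hx).1, by omega⟩⟩
  · intro c _ _
    exact mul_nonneg (auxp_nonneg s _) (mul_nonneg (auxp_nonneg s _) (auxp_nonneg s _))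

theorem aux_k (s : ℕ) (hs : 2 ≤ s) (k : ℕ) : ∃ D : ℝ, 0 < D ∧ (1 ≤ k → k < s →
    ∀ u v : ℕ, ∀ P : Finset (Finset ℕ × Finset ℕ),
    (∀ p ∈ P, auxOK s u v p ∧ (p.1 ∩ p.2).card = k) →
    ∑ p ∈ P, ∏ x ∈ p.1 ∪ p.2, auxw s x ≤ D * ((min u v : ℕ) : ℝ) ^ (-(3 / (4 * (s : ℝ))))) := by
  by_cases hk : 1 ≤ k ∧ k < s
  swap
  · exact ⟨1, one_pos, fun h1 h2 => absurd ⟨h1, h2⟩ hk⟩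
  obtain ⟨hk1, hks⟩ := hk
  obtain ⟨C1, hC1, h1⟩ := auxW_bound s hs k hk1 hks.le
  obtain ⟨C2, hC2, h2⟩ := auxW_bound s hs (s - k) (by omega) (by omega)
  have hs0 : (0 : ℝ) < s := by positivity
  have hk0 : (0 : ℝ) < k := by exact_mod_cast hk1
  have hk1' : (1 : ℝ) ≤ k := by exact_mod_cast hk1
  have hks' : (k : ℝ) + 1 ≤ s := by exact_mod_cast hks
  set α : ℝ := (k : ℝ) / s with hα
  have hα0 : 0 < α := by positivity
  have hα1 : α ≤ 1 := by rw [hα, div_le_one hs0]; linarith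
  set q : ℝ := 1 - α - 3 / (4 * (s : ℝ)) with hq
  have hq' : q = (4 * (s - k) - 3) / (4 * s) := by rw [hq, hα]; field_simp
  have hq0 : 0 < q := by rw [hq']; apply div_pos <;> linarith
  have h34 : 0 < 3 / (4 * (s : ℝ)) := by positivity
  have hq1 : q ≤ 1 := by linarith
  have hq2 : -α + -α ≤ q - 1 := by
    have : 3 / (4 * (s : ℝ)) ≤ α := by
      rw [hα, div_le_div_iff₀ (by positivity) hs0]; nlinarith
    linarith
  refine ⟨C1 * C2 * C2 * (2 / α + 2 / q), by positivity, fun _ _ u v P hP => ?_⟩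
  set μ := min u v with hμ
  have hmap : ∀ p ∈ P, (p.1 ∩ p.2).sum id ∈ Finset.Ico 1 μ := by
    intro p hp
    obtain ⟨⟨hp1, hp2, c1, c2, s1, s2⟩, hc⟩ := hP p hp
    have e1 : (p.1 ∩ p.2).sum id + (p.1 \ p.2).sum id = p.1.sum id :=
      Finset.sum_inter_add_sum_sdiff p.1 p.2 id
    have e2 : (p.2 ∩ p.1).sum id + (p.2 \ p.1).sum id = p.2.sum id :=
      Finset.sum_inter_add_sum_sdiff p.2 p.1 id
    have d1 := Finset.card_inter_add_card_sdiff p.1 p.2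
    have d2 := Finset.card_inter_add_card_sdiff p.2 p.1
    rw [Finset.inter_comm p.2 p.1] at e2 d2
    have g0 := aux_sum_pos (ω := p.1 ∩ p.2) (fun x hx => hp1 x (Finset.mem_inter.1 hx).1)
      (by rw [← Finset.card_pos]; omega)
    have g1 := aux_sum_pos (ω := p.1 \ p.2) (fun x hx => hp1 x (Finset.mem_sdiff.1 hx).1)
      (by rw [← Finset.card_pos]; omega)
    have g2 := aux_sum_pos (ω := p.2 \ p.1) (fun x hx => hp2 x (Finset.mem_sdiff.1 hx).1)
      (by rw [← Finset.card_pos]; omega)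
    rw [Finset.mem_Ico, hμ, lt_min_iff]
    omega
  rw [← Finset.sum_fiberwise_of_maps_to hmap]
  have hb : ∀ t ∈ Finset.Ico 1 μ,
      ∑ p ∈ P.filter (fun p => (p.1 ∩ p.2).sum id = t), ∏ x ∈ p.1 ∪ p.2, auxw s x ≤
      C1 * C2 * C2 * ((t : ℝ) ^ (α - 1) * ((μ - t : ℕ) : ℝ) ^ (q - 1)) := by
    intro t ht
    rw [Finset.mem_Ico] at ht
    have hμu : μ ≤ u := min_le_left _ _
    have hμv : μ ≤ v := min_le_right _ _
    refine (aux_fiber s u v k t _ ?_).trans ?_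
    · intro p hp
      rw [Finset.mem_filter] at hp
      exact ⟨(hP p hp.1).1, (hP p hp.1).2, hp.2⟩
    have hex : ((s - k : ℕ) : ℝ) / s - 1 = -α := by
      rw [Nat.cast_sub hks.le, hα]; field_simp; ring
    rw [hex] at h2
    have hμt : (1 : ℝ) ≤ ((μ - t : ℕ) : ℝ) := by exact_mod_cast (by omega : 1 ≤ μ - t)
    have hμt0 : (0 : ℝ) < ((μ - t : ℕ) : ℝ) := by linarith
    have w1 : auxW s (s - k) (u - t) ≤ C2 * ((μ - t : ℕ) : ℝ) ^ (-α) := by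
      refine (h2 (u - t) (by omega)).trans ?_
      apply mul_le_mul_of_nonneg_left _ hC2.le
      apply Real.rpow_le_rpow_of_nonpos hμt0 _ (by linarith)
      exact_mod_cast (by omega : μ - t ≤ u - t)
    have w2 : auxW s (s - k) (v - t) ≤ C2 * ((μ - t : ℕ) : ℝ) ^ (-α) := by
      refine (h2 (v - t) (by omega)).trans ?_
      apply mul_le_mul_of_nonneg_left _ hC2.le
      apply Real.rpow_le_rpow_of_nonpos hμt0 _ (by linarith)
      exact_mod_cast (by omega : μ - t ≤ v - t)
    calc _ ≤ (C1 * (t : ℝ) ^ (α - 1)) * ((C2 * ((μ - t : ℕ) : ℝ) ^ (-α)) *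
          (C2 * ((μ - t : ℕ) : ℝ) ^ (-α))) := by
          apply mul_le_mul (h1 t ht.1) _ _ (by positivity)
          · exact mul_le_mul w1 w2 (auxW_nonneg _ _ _) (by positivity)
          · exact mul_nonneg (auxW_nonneg _ _ _) (auxW_nonneg _ _ _)
      _ = C1 * C2 * C2 * ((t : ℝ) ^ (α - 1) * ((μ - t : ℕ) : ℝ) ^ (-α + -α)) := by
          rw [Real.rpow_add hμt0]; ring
      _ ≤ _ := by
          gcongr
  refine (Finset.sum_le_sum hb).trans ?_
  rw [← Finset.mul_sum, mul_assoc (C1 * C2 * C2)]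
  apply mul_le_mul_of_nonneg_left _ (by positivity)
  refine (aux_conv α q hα0 hα1 hq0 hq1 μ).trans (le_of_eq ?_)
  congr 2
  rw [hq]; ring

theorem aux_pair (s : ℕ) (hs : 2 ≤ s) : ∃ D : ℝ, 0 < D ∧
    ∀ u v : ℕ, ∀ P : Finset (Finset ℕ × Finset ℕ),
    (∀ p ∈ P, auxOK s u v p ∧ p.1 ≠ p.2 ∧ (p.1 ∩ p.2).Nonempty) →
    ∑ p ∈ P, ∏ x ∈ p.1 ∪ p.2, auxw s x ≤ D * ((min u v : ℕ) : ℝ) ^ (-(3 / (4 * (s : ℝ)))) := by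
  choose D hD h using aux_k s hs
  refine ⟨∑ k ∈ Finset.Ico 1 s, D k,
    Finset.sum_pos (fun k _ => hD k) ⟨1, Finset.mem_Ico.2 ⟨le_rfl, hs⟩⟩, fun u v P hP => ?_⟩
  have hmap : ∀ p ∈ P, (p.1 ∩ p.2).card ∈ Finset.Ico 1 s := by
    intro p hp
    obtain ⟨⟨hp1, hp2, c1, c2, s1, s2⟩, hne, hint⟩ := hP p hp
    rw [Finset.mem_Ico]
    refine ⟨Finset.card_pos.2 hint, ?_⟩
    by_contra hcon
    have e1 : p.1 ∩ p.2 = p.1 := Finset.eq_of_subset_of_card_le Finset.inter_subset_left (by omega)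
    have e2 : p.1 ∩ p.2 = p.2 := Finset.eq_of_subset_of_card_le Finset.inter_subset_right (by omega)
    exact hne (e1.symm.trans e2)
  rw [← Finset.sum_fiberwise_of_maps_to hmap, Finset.sum_mul]
  apply Finset.sum_le_sum
  intro k hk
  rw [Finset.mem_Ico] at hk
  apply h k hk.1 hk.2
  intro p hp
  rw [Finset.mem_filter] at hp
  exact ⟨(hP p hp.1).1, hp.2⟩

theorem stmt_13 (s : ℕ) (hs : 2 ≤ s) (K : ℝ) (hK : 0 < K) :
    ∃ C : ℝ, 0 < C ∧ ∀ B : Set ℕ, (∀ b ∈ B, 1 ≤ b) →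
      ∀ N : ℕ, 3 ≤ N → (countB B N : ℝ) ≤ K * Real.log N →
      ∀ n m : ℕ,
        ((N : ℝ) / 2 ≤ n ∧ n ≤ N ∧ ∀ b ∈ B, (Real.log N) ^ (4 * s) < |(n : ℝ) - b|) →
        ((N : ℝ) / 2 ≤ m ∧ m ≤ N ∧ ∀ b ∈ B, (Real.log N) ^ (4 * s) < |(m : ℝ) - b|) →
        ∑ p ∈ (((Finset.powersetCard s (Finset.Icc 1 n)).filter
                (fun ω : Finset ℕ => n - ω.sum id ∈ B)) ×ˢ
              ((Finset.powersetCard s (Finset.Icc 1 m)).filter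
                (fun ω : Finset ℕ => m - ω.sum id ∈ B))).filter
            (fun p : Finset ℕ × Finset ℕ => p.1 ≠ p.2 ∧ (p.1 ∩ p.2).Nonempty),
          ((s : ℝ) ^ (p.1 ∪ p.2).card)⁻¹ * ∏ x ∈ p.1 ∪ p.2, (x : ℝ) ^ (-1 + 1 / (s : ℝ)) ≤
        C / Real.log N := by
  obtain ⟨D, hD, hpair⟩ := aux_pair s hs
  refine ⟨D * K ^ 2, by positivity, ?_⟩
  intro B hB N hN hcount n m hn hm
  obtain ⟨-, hnN, hnB⟩ := hn
  obtain ⟨-, hmN, hmB⟩ := hm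
  have hs0 : (0 : ℝ) < s := by positivity
  have hL : 0 < Real.log N := Real.log_pos (by exact_mod_cast (by omega : 1 < N))
  set L := Real.log N with hLdef
  set P := (((Finset.powersetCard s (Finset.Icc 1 n)).filter
                (fun ω : Finset ℕ => n - ω.sum id ∈ B)) ×ˢ
              ((Finset.powersetCard s (Finset.Icc 1 m)).filter
                (fun ω : Finset ℕ => m - ω.sum id ∈ B))).filter
            (fun p : Finset ℕ × Finset ℕ => p.1 ≠ p.2 ∧ (p.1 ∩ p.2).Nonempty) with hPdef
  set S := (Finset.Icc 1 N).filter (fun b => b ∈ B) with hS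
  have hScard : (S.card : ℝ) ≤ K * L := by
    refine le_trans (le_of_eq ?_) hcount
    unfold countB
    rw [← Set.ncard_coe_finset]
    congr 2
    ext x
    simp [hS]
    tauto
  have hmem : ∀ p ∈ P, ((∀ x ∈ p.1, 1 ≤ x) ∧ (∀ x ∈ p.2, 1 ≤ x) ∧ p.1.card = s ∧ p.2.card = s ∧
      n - p.1.sum id ∈ B ∧ m - p.2.sum id ∈ B) ∧ p.1 ≠ p.2 ∧ (p.1 ∩ p.2).Nonempty := by
    intro p hp
    rw [hPdef, Finset.mem_filter, Finset.mem_product, Finset.mem_filter, Finset.mem_filter,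
      Finset.mem_powersetCard, Finset.mem_powersetCard] at hp
    obtain ⟨⟨⟨⟨a1, a2⟩, a3⟩, ⟨b1, b2⟩, b3⟩, c⟩ := hp
    exact ⟨⟨fun x hx => (Finset.mem_Icc.1 (a1 hx)).1, fun x hx => (Finset.mem_Icc.1 (b1 hx)).1,
      a2, b2, a3, b3⟩, c⟩
  have hle : ∑ p ∈ P, ((s : ℝ) ^ (p.1 ∪ p.2).card)⁻¹ *
      ∏ x ∈ p.1 ∪ p.2, (x : ℝ) ^ (-1 + 1 / (s : ℝ)) ≤ ∑ p ∈ P, ∏ x ∈ p.1 ∪ p.2, auxw s x := by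
    apply Finset.sum_le_sum
    intro p _
    apply mul_le_of_le_one_left (auxp_nonneg s _)
    apply inv_le_one_of_one_le₀
    apply one_le_pow₀
    exact_mod_cast (by omega : 1 ≤ s)
  refine hle.trans ?_
  have hmap : ∀ p ∈ P, (n - p.1.sum id, m - p.2.sum id) ∈ S ×ˢ S := by
    intro p hp
    obtain ⟨⟨-, -, -, -, h1, h2⟩, -⟩ := hmem p hp
    rw [Finset.mem_product, hS, Finset.mem_filter, Finset.mem_filter, Finset.mem_Icc,
      Finset.mem_Icc]
    have := hB _ h1
    have := hB _ h2
    refine ⟨⟨⟨?_, ?_⟩, h1⟩, ⟨⟨?_, ?_⟩, h2⟩⟩ <;> dsimp only <;> omega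
  rw [← Finset.sum_fiberwise_of_maps_to hmap]
  have hb : ∀ c ∈ S ×ˢ S, ∑ p ∈ P.filter (fun p => (n - p.1.sum id, m - p.2.sum id) = c),
      ∏ x ∈ p.1 ∪ p.2, auxw s x ≤ D * (L ^ 3)⁻¹ := by
    rintro ⟨b, b'⟩ hbb
    rw [Finset.mem_product, hS, Finset.mem_filter, Finset.mem_filter] at hbb
    obtain ⟨⟨-, hbB⟩, ⟨-, hbB'⟩⟩ := hbb
    dsimp only at hbB hbB'
    have hb1 := hB b hbB
    have hb1' := hB b' hbB'
    rcases Finset.eq_empty_or_nonempty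
      (P.filter (fun p => (n - p.1.sum id, m - p.2.sum id) = (b, b'))) with he | ⟨p0, hp0⟩
    · rw [he, Finset.sum_empty]; positivity
    have hp0' := (Finset.mem_filter.1 hp0).2
    rw [Prod.mk.injEq] at hp0'
    have hbn : b ≤ n := by omega
    have hbm : b' ≤ m := by omega
    refine (hpair (n - b) (m - b') _ ?_).trans ?_
    · intro p hp
      rw [Finset.mem_filter, Prod.mk.injEq] at hp
      obtain ⟨hp, e1, e2⟩ := hp
      obtain ⟨⟨h1, h2, h3, h4, h5, h6⟩, h7⟩ := hmem p hp
      exact ⟨⟨h1, h2, h3, h4, by omega, by omega⟩, h7⟩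
    · apply mul_le_mul_of_nonneg_left _ hD.le
      have k1 : L ^ (4 * s) < ((n - b : ℕ) : ℝ) := by
        have := hnB b hbB
        rwa [← Nat.cast_sub hbn, abs_of_nonneg (Nat.cast_nonneg _)] at this
      have k2 : L ^ (4 * s) < ((m - b' : ℕ) : ℝ) := by
        have := hmB b' hbB'
        rwa [← Nat.cast_sub hbm, abs_of_nonneg (Nat.cast_nonneg _)] at this
      have k3 : L ^ (4 * s) ≤ ((min (n - b) (m - b') : ℕ) : ℝ) := by
        rw [Nat.cast_min]
        exact le_min k1.le k2.le
      have hpos : 0 < L ^ (4 * s) := by positivity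
      refine (Real.rpow_le_rpow_of_nonpos hpos k3 (by
        have : 0 < 3 / (4 * (s : ℝ)) := by positivity
        linarith)).trans (le_of_eq ?_)
      rw [Real.rpow_neg hpos.le, ← Real.rpow_natCast, ← Real.rpow_mul hL.le]
      congr 1
      rw [← Real.rpow_natCast]
      congr 1
      push_cast
      field_simp
  refine (Finset.sum_le_card_nsmul _ _ _ hb).trans ?_
  rw [nsmul_eq_mul, Finset.card_product]
  push_cast
  calc (S.card : ℝ) * S.card * (D * (L ^ 3)⁻¹) ≤ (K * L) * (K * L) * (D * (L ^ 3)⁻¹) := by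
        gcongr
    _ = D * K ^ 2 / L := by field_simp
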